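/- Define b : ℝ × P₂(ℝ) → ℝ by b(x,μ) = −20x³ − 20x|x| − 5x + (1/4)sin x + (1/10)∫_ℝ |u| dμ(u) and σ : ℝ × P₂(ℝ) → ℝ by σ(x,μ) = x/10 + (1/20)∫_ℝ |u| dμ(u). Then for all x, y ∈ ℝ and all μ, ν ∈ P₂(ℝ): 2(x−y)(b(x,μ) − b(y,ν)) + |σ(x,μ) − σ(y,ν)|² ≤ −9|x−y|² + (3/20)W₂(μ,ν)². -/

import Mathlib

/-!
Write `D = x - y` and `m = ∫|u| dμ - ∫|u| dν`. The functions `x³` and `x|x|` are nondecreasing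
and `sin` is 1-Lipschitz, so the left-hand side is at most
`-10 D² + D²/2 + Dm/5 + (D/10 + m/20)²`. Subtracting this from `-9 D² + (3/20) m²` leaves
`0.49 D² - 0.21 Dm + 0.1475 m²`, a positive definite form. It remains to see `|m| ≤ W₂(μ, ν)`,
which is `abs_moment_sub_le_wasserstein2`: any coupling `π` satisfies
`|m| ≤ ∫|q₁ - q₂| dπ ≤ (∫|q₁ - q₂|² dπ)^{1/2}`, and the product coupling shows that the infimum
is over a nonempty set.
-/

open MeasureTheory
open scoped ENNReal NNReal

noncomputable section

abbrev Euc (d : ℕ) := EuclideanSpace ℝ (Fin d)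

/-- A coupling of two measures. -/
def IsCoupling {α : Type*} [MeasurableSpace α] (π : Measure (α × α)) (μ ν : Measure α) : Prop :=
  π.map Prod.fst = μ ∧ π.map Prod.snd = ν

/-- The L²-Wasserstein distance between two measures. -/
def wasserstein2 {α : Type*} [MeasurableSpace α] [NormedAddCommGroup α]
    (μ ν : Measure α) : ℝ :=
  sInf { r : ℝ | ∃ π : Measure (α × α), IsProbabilityMeasure π ∧ IsCoupling π μ ν ∧
    r = (∫ q, ‖q.1 - q.2‖ ^ 2 ∂π) ^ (1/2 : ℝ) }

/-- The second-moment functional `W₂(μ) = (∫ ‖x‖² dμ)^{1/2}`. -/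
def secondMomentRoot {α : Type*} [MeasurableSpace α] [NormedAddCommGroup α]
    (μ : Measure α) : ℝ :=
  (∫ x, ‖x‖ ^ 2 ∂μ) ^ (1/2 : ℝ)

/-- Membership in `P₂`: probability measure with finite second moment. -/
def MemP2 {α : Type*} [MeasurableSpace α] [NormedAddCommGroup α] (μ : Measure α) : Prop :=
  IsProbabilityMeasure μ ∧ Integrable (fun x => ‖x‖ ^ 2) μ

/-- The empirical measure `(1/N) ∑ δ_{x i}`. -/
def empMeas {α : Type*} [MeasurableSpace α] {N : ℕ} (x : Fin N → α) : Measure α :=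
  (N : ℝ≥0∞)⁻¹ • ∑ i, Measure.dirac (x i)

/-- The Hilbert–Schmidt (Frobenius) norm of a real matrix. -/
def frobNorm {d m : ℕ} (A : Matrix (Fin d) (Fin m) ℝ) : ℝ :=
  Real.sqrt (∑ i, ∑ j, (A i j) ^ 2)

/-- The projection operator `ψ(x) = min{1, h^{-1/(2(κ+2))} |x|⁻¹} x`. -/
def projOp (d : ℕ) (h κ : ℝ) (x : Euc d) : Euc d :=
  min 1 (h ^ (-(1 : ℝ) / (2 * (κ + 2))) * ‖x‖⁻¹) • x

/-- Matrix–vector multiplication landing in Euclidean space. -/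
def mulVecE {d m : ℕ} (A : Matrix (Fin d) (Fin m) ℝ) (w : Euc m) : Euc d :=
  (WithLp.equiv 2 (Fin d → ℝ)).symm (A.mulVec ((WithLp.equiv 2 (Fin m → ℝ)) w))


/-- Example 4.2 drift. -/
def bEx2 (x : ℝ) (μ : Measure ℝ) : ℝ :=
  -20 * x ^ 3 - 20 * x * |x| - 5 * x + (1 / 4) * Real.sin x + (1 / 10) * ∫ u, |u| ∂μ

/-- Example 4.2 diffusion. -/
def σEx2 (x : ℝ) (μ : Measure ℝ) : ℝ := x / 10 + (1 / 20) * ∫ u, |u| ∂μ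

/-- First absolute moments are 1-Lipschitz with respect to the cost of any coupling:
`(∫|u| dμ - ∫|u| dν)² ≤ (∫ |q₁ - q₂| dπ)² ≤ ∫ |q₁ - q₂|² dπ`. -/
lemma abs_moment_sub_le_cost {μ ν : Measure ℝ} (hμ : MemP2 μ) (hν : MemP2 ν)
    {π : Measure (ℝ × ℝ)} [IsProbabilityMeasure π] (hπ : IsCoupling π μ ν) :
    |(∫ u, |u| ∂μ) - ∫ u, |u| ∂ν| ≤ (∫ q, ‖q.1 - q.2‖ ^ 2 ∂π) ^ (1 / 2 : ℝ) := by
  obtain ⟨h1, h2⟩ := hπ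
  have hf : MemLp (fun q : ℝ × ℝ => q.1) 2 π := by
    rw [memLp_two_iff_integrable_sq_norm (by fun_prop)]
    have h := hμ.2
    rw [← h1] at h
    exact h.comp_measurable measurable_fst
  have hs : MemLp (fun q : ℝ × ℝ => q.2) 2 π := by
    rw [memLp_two_iff_integrable_sq_norm (by fun_prop)]
    have h := hν.2
    rw [← h2] at h
    exact h.comp_measurable measurable_snd
  have hd : MemLp (fun q : ℝ × ℝ => ‖q.1 - q.2‖) 2 π := (hf.sub hs).norm
  have hdi : Integrable (fun q : ℝ × ℝ => ‖q.1 - q.2‖) π := hd.integrable one_le_two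
  have hd2 : Integrable (fun q : ℝ × ℝ => ‖q.1 - q.2‖ ^ 2) π := hd.integrable_sq
  have e1 : ∫ u, |u| ∂μ = ∫ q, |q.1| ∂π := by
    rw [← h1, integral_map (by fun_prop) (by fun_prop)]
  have e2 : ∫ u, |u| ∂ν = ∫ q, |q.2| ∂π := by
    rw [← h2, integral_map (by fun_prop) (by fun_prop)]
  have hi1 : Integrable (fun q : ℝ × ℝ => |q.1|) π := (hf.integrable one_le_two).abs
  have hi2 : Integrable (fun q : ℝ × ℝ => |q.2|) π := (hs.integrable one_le_two).abs
  have hle : |(∫ u, |u| ∂μ) - ∫ u, |u| ∂ν| ≤ ∫ q, ‖q.1 - q.2‖ ∂π := by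
    rw [e1, e2, ← integral_sub hi1 hi2]
    refine (abs_integral_le_integral_abs).trans ?_
    exact integral_mono (hi1.sub hi2).abs hdi fun q => abs_abs_sub_abs_le q.1 q.2
  have hcs : (∫ q, ‖q.1 - q.2‖ ∂π) ^ 2 ≤ ∫ q, ‖q.1 - q.2‖ ^ 2 ∂π := by
    have hv := ProbabilityTheory.variance_nonneg (fun q : ℝ × ℝ => ‖q.1 - q.2‖) π
    rw [ProbabilityTheory.variance_eq_sub hd] at hv
    simpa using hv
  rw [← Real.sqrt_eq_rpow]
  exact hle.trans (Real.le_sqrt_of_sq_le hcs)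

lemma abs_moment_sub_le_wasserstein2 {μ ν : Measure ℝ} (hμ : MemP2 μ) (hν : MemP2 ν) :
    |(∫ u, |u| ∂μ) - ∫ u, |u| ∂ν| ≤ wasserstein2 μ ν := by
  have := hμ.1
  have := hν.1
  refine le_csInf ⟨_, μ.prod ν, inferInstance, ⟨?_, ?_⟩, rfl⟩ ?_
  · simp
  · simp
  · rintro r ⟨π, hp, hc, rfl⟩
    exact abs_moment_sub_le_cost hμ hν hc

lemma sub_mul_cube_sub_nonneg (x y : ℝ) : 0 ≤ (x - y) * (x ^ 3 - y ^ 3) := by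
  have h : (x - y) * (x ^ 3 - y ^ 3) = (x - y) ^ 2 * ((x + y / 2) ^ 2 + 3 / 4 * y ^ 2) := by ring
  rw [h]
  positivity

/-- Monotonicity of `x ↦ x|x|`. -/
lemma sub_mul_mul_abs_sub_nonneg (x y : ℝ) : 0 ≤ (x - y) * (x * |x| - y * |y|) := by
  -- The product is `(|x| + |y|)(|x| - |y|)² + (|x| + |y|)(|x||y| - xy)`.
  have h : (x - y) * (x * |x| - y * |y|) =
      (|x| + |y|) * ((|x| - |y|) ^ 2 + (|x| * |y| - x * y)) := by
    have hx := sq_abs x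
    have hy := sq_abs y
    linear_combination -|x| * hx - |y| * hy
  have hxy : 0 ≤ |x| * |y| - x * y := by
    rw [← abs_mul]
    exact sub_nonneg.2 (le_abs_self _)
  rw [h]
  positivity

/-- `sin` is 1-Lipschitz, in one-sided form. -/
lemma sub_mul_sin_sub_le (x y : ℝ) : (x - y) * (Real.sin x - Real.sin y) ≤ (x - y) ^ 2 := by
  have h : |Real.sin x - Real.sin y| ≤ |x - y| := by
    simpa [Real.dist_eq] using Real.lipschitzWith_sin.dist_le_mul x y
  calc (x - y) * (Real.sin x - Real.sin y) ≤ |x - y| * |Real.sin x - Real.sin y| := by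
        rw [← abs_mul]; exact le_abs_self _
    _ ≤ |x - y| * |x - y| := by gcongr
    _ = (x - y) ^ 2 := by rw [abs_mul_abs_self]; ring

/-- Verification of Assumption 2.1 for Example 4.2 with `K₁ = 9`, `K₂ = 3/20`. -/
theorem example2_contractive_monotonicity :
    ∀ (x y : ℝ) (μ ν : Measure ℝ), MemP2 μ → MemP2 ν →
      2 * (x - y) * (bEx2 x μ - bEx2 y ν) + |σEx2 x μ - σEx2 y ν| ^ 2 ≤
        -9 * |x - y| ^ 2 + (3 / 20) * wasserstein2 μ ν ^ 2 := by
  intro x y μ ν hμ hν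
  have hW := sq_le_sq' (neg_le_of_abs_le (abs_moment_sub_le_wasserstein2 hμ hν))
    (le_of_abs_le (abs_moment_sub_le_wasserstein2 hμ hν))
  have h3 := sub_mul_cube_sub_nonneg x y
  have h2 := sub_mul_mul_abs_sub_nonneg x y
  have hs := sub_mul_sin_sub_le x y
  rw [sq_abs, sq_abs]
  unfold bEx2 σEx2
  generalize (∫ u, |u| ∂μ) = a at *
  generalize (∫ u, |u| ∂ν) = b at *
  have hq : 0 ≤ 0.49 * (x - y) ^ 2 - 0.21 * ((x - y) * (a - b)) + 0.1475 * (a - b) ^ 2 := by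
    nlinarith [sq_nonneg (0.7 * (x - y) - 0.15 * (a - b)), sq_nonneg (a - b)]
  linarith
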